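/- (Frenkel–Turaev summation) Let p, q be complex numbers with |p| < 1, |q| < 1, let N be a nonnegative integer, and let a, b, c, d, e be nonzero complex numbers satisfying the balancing condition b·c·d·e = a²·q^{N+1}, generic in the sense that every theta factor appearing in a denominator below is nonzero. Then ∑_{n=0}^{N} [θ(aq^{2n};p)/θ(a;p)] · [θ(a;p)_n θ(b;p)_n θ(c;p)_n θ(d;p)_n θ(e;p)_n θ(q^{−N};p)_n] / [θ(q;p)_n θ(aq/b;p)_n θ(aq/c;p)_n θ(aq/d;p)_n θ(aq/e;p)_n θ(aq^{N+1};p)_n] · q^n = [θ(aq;p)_N θ(aq/(bc);p)_N θ(aq/(bd);p)_N θ(aq/(cd);p)_N] / [θ(aq/b;p)_N θ(aq/c;p)_N θ(aq/d;p)_N θ(aq/(bcd);p)_N]. -/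

import Mathlib

open Complex Real Filter Topology

/-- The infinite q-Pochhammer symbol (z;q)_inf. -/
noncomputable def qpoch (z q : ℂ) : ℂ := ∏' j : ℕ, (1 - z * q ^ j)

/-- The elliptic gamma function Γ(z;p,q). -/
noncomputable def egamma (z p q : ℂ) : ℂ :=
  ∏' jk : ℕ × ℕ, (1 - z⁻¹ * p ^ (jk.1 + 1) * q ^ (jk.2 + 1)) / (1 - z * p ^ jk.1 * q ^ jk.2)

/-- The short Jacobi theta function θ(z;p) (base first argument). -/
noncomputable def theta (p z : ℂ) : ℂ := qpoch z p * qpoch (p * z⁻¹) p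

/-- The elliptic Pochhammer symbol θ(z;p)_n for n ≥ 0 (with shift base q). -/
noncomputable def thetaPochN (p q z : ℂ) (n : ℕ) : ℂ := ∏ j ∈ Finset.range n, theta p (z * q ^ j)

noncomputable def ppoch (p : ℂ) (n : ℕ) : ℂ := ∏ j ∈ Finset.range n, (1 - p ^ (j + 1))

lemma one_sub_pow_ne {p : ℂ} (hp : ‖p‖ < 1) (j : ℕ) : (1 - p ^ (j + 1)) ≠ 0 := by
  intro h
  have h1 : p ^ (j + 1) = 1 := (sub_eq_zero.mp h).symm
  have h2 : ‖p‖ ^ (j + 1) < 1 := pow_lt_one₀ (norm_nonneg _) hp (by omega)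
  rw [← norm_pow, h1] at h2
  simp at h2

lemma ppoch_ne {p : ℂ} (hp : ‖p‖ < 1) (n : ℕ) : ppoch p n ≠ 0 :=
  Finset.prod_ne_zero_iff.mpr fun j _ => one_sub_pow_ne hp j

lemma ppoch_succ (p : ℂ) (n : ℕ) : ppoch p (n + 1) = ppoch p n * (1 - p ^ (n + 1)) := by
  simp [ppoch, Finset.prod_range_succ]

lemma gauss_coeff {s : ℂ} (hs : ‖s ^ 2‖ < 1) (w : ℂ) (i k : ℕ) :
    s ^ ((i + 1) ^ 2) * w ^ (i + 1) * (ppoch (s^2) (i + k + 2) / (ppoch (s^2) (i + 1) * ppoch (s^2) (k + 1)))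
     = s ^ ((i + 1) ^ 2) * w ^ (i + 1) * (ppoch (s^2) (i + k + 1) / (ppoch (s^2) (i + 1) * ppoch (s^2) k))
      + s ^ (i ^ 2) * w ^ i * (ppoch (s^2) (i + k + 1) / (ppoch (s^2) i * ppoch (s^2) (k + 1))) *
        (w * s ^ (2 * (i + k + 1) + 1)) := by
  have h1 := ppoch_ne hs i
  have h2 := ppoch_ne hs k
  have h3 := one_sub_pow_ne hs i
  have h4 := one_sub_pow_ne hs k
  rw [show i + k + 2 = (i + k + 1) + 1 by ring, ppoch_succ _ (i+k+1), ppoch_succ _ i, ppoch_succ _ k]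
  field_simp
  ring

lemma pascal_sum (f g h : ℕ → ℂ) (m : ℕ) (h0 : h 0 = f 0) (hm : h (m + 1) = g m)
    (hi : ∀ i < m, h (i + 1) = f (i + 1) + g i) :
    ∑ i ∈ Finset.range (m + 1), (f i + g i) = ∑ i ∈ Finset.range (m + 1 + 1), h i := by
  rw [Finset.sum_add_distrib, Finset.sum_range_succ' h, Finset.sum_range_succ (fun k => h (k + 1)) m,
    Finset.sum_range_succ' f, Finset.sum_range_succ g, h0, hm,
    Finset.sum_congr rfl (fun i hx => hi i (Finset.mem_range.mp hx)), Finset.sum_add_distrib]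
  ring

lemma gauss_binom {s : ℂ} (hs : ‖s ^ 2‖ < 1) (w : ℂ) (m : ℕ) :
    ∏ j ∈ Finset.range m, (1 + w * s ^ (2 * j + 1)) =
      ∑ i ∈ Finset.range (m + 1), s ^ (i ^ 2) * w ^ i *
        (ppoch (s^2) m / (ppoch (s^2) i * ppoch (s^2) (m - i))) := by
  induction m with
  | zero => simp [ppoch]
  | succ m ih =>
    rw [Finset.prod_range_succ, ih, mul_add, mul_one, Finset.sum_mul, ← Finset.sum_add_distrib]
    have h1 := ppoch_ne hs m
    have h2 := ppoch_ne hs (m+1)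
    have h0 : ppoch (s^2) 0 = 1 := by simp [ppoch]
    apply pascal_sum
    · simp only [Nat.sub_zero, h0]
      field_simp
    · simp only [Nat.sub_self, h0]
      field_simp
      ring
    · intro i hi
      obtain ⟨k, rfl⟩ : ∃ k, m = i + k + 1 := ⟨m - i - 1, by omega⟩
      have := gauss_coeff hs w i k
      rw [show i + k + 1 + 1 - (i + 1) = k + 1 by omega, show i + k + 1 - (i + 1) = k by omega,
        show i + k + 1 - i = k + 1 by omega]
      exact this

lemma finite_jtp {s : ℂ} (hs0 : s ≠ 0) (hs : ‖s ^ 2‖ < 1) {w : ℂ} (hw : w ≠ 0) (n : ℕ) :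
    (∏ j ∈ Finset.range n, (1 + w * s ^ (2 * j + 1))) *
      (∏ j ∈ Finset.range n, (1 + w⁻¹ * s ^ (2 * j + 1))) =
      ∑ i ∈ Finset.range (2 * n + 1), s ^ (((i : ℤ) - n) ^ 2) * w ^ ((i : ℤ) - n) *
        (ppoch (s^2) (2 * n) / (ppoch (s^2) i * ppoch (s^2) (2 * n - i))) := by
  have h := gauss_binom hs (w * (s ^ (2 * n))⁻¹) (2 * n)
  have h1 : ∏ j ∈ Finset.range (2 * n), (1 + w * (s ^ (2 * n))⁻¹ * s ^ (2 * j + 1)) =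
      (w ^ n * (s ^ (n^2))⁻¹) * ((∏ j ∈ Finset.range n, (1 + w * s ^ (2 * j + 1))) *
      (∏ j ∈ Finset.range n, (1 + w⁻¹ * s ^ (2 * j + 1)))) := by
    rw [two_mul, Finset.prod_range_add]
    have e1 : ∏ j ∈ Finset.range n, (1 + w * (s ^ (n + n))⁻¹ * s ^ (2 * (n + j) + 1)) =
        ∏ j ∈ Finset.range n, (1 + w * s ^ (2 * j + 1)) := by
      refine Finset.prod_congr rfl fun j _ => ?_
      field_simp
      ring
    have e2 : ∏ j ∈ Finset.range n, (1 + w * (s ^ (n + n))⁻¹ * s ^ (2 * j + 1)) =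
        (w ^ n * (s ^ (n^2))⁻¹) * ∏ j ∈ Finset.range n, (1 + w⁻¹ * s ^ (2 * j + 1)) := by
      have e3 : w ^ n * (s ^ (n^2))⁻¹ = ∏ j ∈ Finset.range n, (w * (s ^ (2 * j + 1))⁻¹) := by
        rw [Finset.prod_mul_distrib, Finset.prod_inv_distrib, Finset.prod_pow_eq_pow_sum,
          show ∑ j ∈ Finset.range n, (2 * j + 1) = n ^ 2 by
            clear e1 h; induction n with
            | zero => rfl
            | succ n ih => rw [Finset.sum_range_succ, ih]; ring]
        simp
      rw [e3, ← Finset.prod_mul_distrib, ← Finset.prod_range_reflect]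
      refine Finset.prod_congr rfl fun j hj => ?_
      obtain ⟨k, rfl⟩ : ∃ k, n = j + k + 1 := ⟨n - j - 1, by have := Finset.mem_range.mp hj; omega⟩
      rw [show j + k + 1 - 1 - j = k by omega]
      field_simp
      ring
    rw [e1, e2]; ring
  rw [h1] at h
  have hc : w ^ n * (s ^ (n^2))⁻¹ ≠ 0 := mul_ne_zero (pow_ne_zero _ hw) (inv_ne_zero (pow_ne_zero _ hs0))
  apply mul_left_cancel₀ hc
  rw [h, Finset.mul_sum]
  refine Finset.sum_congr rfl fun i _ => ?_
  rw [← mul_assoc]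
  congr 1
  have e4 : ((i : ℤ) - n)^2 = ((i^2 : ℕ) : ℤ) + ((n^2 : ℕ) : ℤ) - ((2 * n * i : ℕ) : ℤ) := by push_cast; ring
  rw [e4, zpow_sub₀ hs0, zpow_add₀ hs0, zpow_sub₀ hw, mul_pow, inv_pow, ← pow_mul]
  simp only [zpow_natCast]
  field_simp


lemma summable_geom_mul {p : ℂ} (hp : ‖p‖ < 1) (z : ℂ) : Summable fun j : ℕ => ‖-(z * p ^ j)‖ := by
  simp only [norm_neg, norm_mul, norm_pow]
  exact (summable_geometric_of_lt_one (norm_nonneg _) hp).mul_left _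

lemma qpoch_tendsto {p : ℂ} (hp : ‖p‖ < 1) (z : ℂ) :
    Tendsto (fun n => ∏ j ∈ Finset.range n, (1 - z * p ^ j)) atTop (𝓝 (qpoch z p)) := by
  have h := (multipliable_one_add_of_summable (summable_geom_mul hp z)).hasProd.tendsto_prod_nat
  simpa only [← sub_eq_add_neg, qpoch] using h

lemma ppoch_tendsto {p : ℂ} (hp : ‖p‖ < 1) :
    Tendsto (ppoch p) atTop (𝓝 (qpoch p p)) := by
  have h := qpoch_tendsto hp p
  refine h.congr fun n => ?_
  simp only [ppoch, pow_succ']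

lemma qpoch_self_ne {p : ℂ} (hp : ‖p‖ < 1) : qpoch p p ≠ 0 := by
  have h := tprod_one_add_ne_zero_of_summable (f := fun j : ℕ => -(p * p ^ j)) (fun j => by
    rw [← sub_eq_add_neg, ← pow_succ']; exact one_sub_pow_ne hp j) (summable_geom_mul hp p)
  simpa only [← sub_eq_add_neg, qpoch] using h

lemma summable_theta {s w : ℂ} (hs0 : s ≠ 0) (hs : ‖s‖ < 1) (hw : w ≠ 0) :
    Summable fun k : ℤ => ‖s ^ (k ^ 2) * w ^ k‖ := by
  obtain ⟨τ, hτ⟩ : ∃ τ : ℂ, cexp (π * I * τ) = s := by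
    refine ⟨Complex.log s / (π * I), ?_⟩
    rw [mul_div_cancel₀ _ (by simp [Real.pi_ne_zero]), Complex.exp_log hs0]
  obtain ⟨z, hz⟩ : ∃ z : ℂ, cexp (2 * π * I * z) = w := by
    refine ⟨Complex.log w / (2 * π * I), ?_⟩
    rw [mul_div_cancel₀ _ (by simp [Real.pi_ne_zero]), Complex.exp_log hw]
  have him : 0 < τ.im := by
    rw [← hτ, Complex.norm_exp, Real.exp_lt_one_iff] at hs
    simp at hs
    by_contra h
    push Not at h
    nlinarith [Real.pi_pos]
  have := ((summable_jacobiTheta₂_term_iff z τ).mpr him).norm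
  refine this.congr fun k => ?_
  rw [jacobiTheta₂_term, Complex.exp_add, ← hτ, ← hz, ← Complex.exp_int_mul, ← Complex.exp_int_mul, mul_comm]
  congr 3
  · push_cast; ring
  · ring

lemma theta_series {s w : ℂ} (hs0 : s ≠ 0) (hs : ‖s‖ < 1) (hw : w ≠ 0) :
    theta (s ^ 2) (-(w * s)) = (qpoch (s^2) (s^2))⁻¹ * ∑' k : ℤ, s ^ (k ^ 2) * w ^ k := by
  have hp : ‖s ^ 2‖ < 1 := by
    rw [norm_pow]; exact pow_lt_one₀ (norm_nonneg _) hs (by norm_num)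
  have hne := qpoch_self_ne hp
  have hP := ppoch_tendsto hp
  -- limit of finite products
  have lim1 : Tendsto (fun n => (∏ j ∈ Finset.range n, (1 + w * s ^ (2 * j + 1))) *
      (∏ j ∈ Finset.range n, (1 + w⁻¹ * s ^ (2 * j + 1)))) atTop (𝓝 (theta (s ^ 2) (-(w * s)))) := by
    refine ((qpoch_tendsto hp (-(w*s))).mul (qpoch_tendsto hp (s^2 * (-(w*s))⁻¹))).congr fun n => ?_
    congr 1
    · refine Finset.prod_congr rfl fun j _ => ?_
      ring
    · refine Finset.prod_congr rfl fun j _ => ?_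
      field_simp
      ring
  let f : ℕ → ℤ → ℂ := fun n k => if k ∈ Finset.Icc (-(n:ℤ)) n then s ^ (k ^ 2) * w ^ k *
     (ppoch (s^2) (2 * n) / (ppoch (s^2) (n + k).toNat * ppoch (s^2) (n - k).toNat)) else 0
  obtain ⟨C, hC⟩ : ∃ C, ∀ n, ‖ppoch (s^2) n‖ ≤ C := by
    obtain ⟨C, hC⟩ := hP.norm.bddAbove_range
    exact ⟨C, fun n => hC ⟨n, rfl⟩⟩
  obtain ⟨C', hC'⟩ : ∃ C, ∀ n, ‖(ppoch (s^2) n)⁻¹‖ ≤ C := by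
    obtain ⟨C, hC⟩ := (hP.inv₀ hne).norm.bddAbove_range
    exact ⟨C, fun n => hC ⟨n, rfl⟩⟩
  have hC0 : 0 ≤ C := (norm_nonneg _).trans (hC 0)
  have hC'0 : 0 ≤ C' := (norm_nonneg _).trans (hC' 0)
  have lim2 : Tendsto (fun n => ∑' k, f n k) atTop
      (𝓝 (∑' k : ℤ, s ^ (k ^ 2) * w ^ k * (qpoch (s^2) (s^2))⁻¹)) := by
    refine tendsto_tsum_of_dominated_convergence
      (bound := fun k => ‖s ^ (k ^ 2) * w ^ k‖ * (C * (C' * C'))) ((summable_theta hs0 hs hw).mul_right _) ?_ ?_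
    · intro k
      have t1 : Tendsto (fun n : ℕ => 2 * n) atTop atTop :=
        tendsto_atTop_mono (fun n => by simp only [id]; omega) tendsto_id
      have t2 : Tendsto (fun n : ℕ => ((n : ℤ) + k).toNat) atTop atTop :=
        tendsto_atTop.mpr fun b => by
          filter_upwards [eventually_ge_atTop (b + k.natAbs)] with n hn
          omega
      have t3 : Tendsto (fun n : ℕ => ((n : ℤ) - k).toNat) atTop atTop :=
        tendsto_atTop.mpr fun b => by
          filter_upwards [eventually_ge_atTop (b + k.natAbs)] with n hn
          omega
      have t4 := ((hP.comp t1).div ((hP.comp t2).mul (hP.comp t3)) (mul_ne_zero hne hne)).const_mul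
        (s ^ (k ^ 2) * w ^ k)
      rw [show qpoch (s^2) (s^2) / (qpoch (s^2) (s^2) * qpoch (s^2) (s^2)) = (qpoch (s^2) (s^2))⁻¹ by
        field_simp] at t4
      refine t4.congr' ?_
      filter_upwards [eventually_ge_atTop k.natAbs] with n hn
      have : k ∈ Finset.Icc (-(n:ℤ)) n := by rw [Finset.mem_Icc]; omega
      simp only [f, this, if_true, Function.comp, Pi.div_apply]
    · refine Eventually.of_forall fun n k => ?_
      simp only [f]
      split_ifs
      · rw [norm_mul _ (_ / _), div_eq_mul_inv, mul_inv, norm_mul (ppoch _ _), norm_mul (_)⁻¹]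
        gcongr
        · exact hC _
        · exact hC' _
        · exact hC' _
      · rw [norm_zero]; positivity
  have heq : ∀ n, (∏ j ∈ Finset.range n, (1 + w * s ^ (2 * j + 1))) *
      (∏ j ∈ Finset.range n, (1 + w⁻¹ * s ^ (2 * j + 1))) = ∑' k, f n k := by
    intro n
    rw [finite_jtp hs0 hp hw, tsum_eq_sum (s := Finset.Icc (-(n:ℤ)) n)
      (fun k hk => by simp only [f, hk, if_false])]
    refine Finset.sum_bij' (fun i _ => (i : ℤ) - n) (fun k _ => (k + n).toNat) ?_ ?_ ?_ ?_ ?_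
    · intro i hi
      rw [Finset.mem_range] at hi; rw [Finset.mem_Icc]; omega
    · intro k hk
      rw [Finset.mem_Icc] at hk; rw [Finset.mem_range]; omega
    · intro i hi; simp
    · intro k hk
      rw [Finset.mem_Icc] at hk; omega
    · intro i hi
      rw [Finset.mem_range] at hi
      have : (i : ℤ) - n ∈ Finset.Icc (-(n:ℤ)) n := by rw [Finset.mem_Icc]; omega
      simp only [f, this, if_true]
      rw [show ((n : ℤ) + (i - n)).toNat = i by omega, show ((n : ℤ) - (i - n)).toNat = 2 * n - i by omega]
  rw [tendsto_nhds_unique (lim1.congr heq) lim2, tsum_mul_right, mul_comm]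

lemma par_bij : Function.Bijective (Sum.elim (fun x : ℤ × ℤ => ((x.1 + x.2, x.1 - x.2) : ℤ × ℤ))
    (fun x : ℤ × ℤ => (x.1 + x.2 + 1, x.1 - x.2))) := by
  constructor
  · rintro (⟨a, b⟩ | ⟨a, b⟩) (⟨c, d⟩ | ⟨c, d⟩) h <;> simp only [Sum.elim_inl, Sum.elim_inr, Prod.mk.injEq] at h
    · obtain ⟨rfl, rfl⟩ : a = c ∧ b = d := by omega
      rfl
    · omega
    · omega
    · obtain ⟨rfl, rfl⟩ : a = c ∧ b = d := by omega
      rfl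
  · rintro ⟨m, n⟩
    rcases Int.emod_two_eq_zero_or_one (m + n) with h | h
    · refine ⟨Sum.inl ((m + n) / 2, (m - n) / 2), ?_⟩
      simp only [Sum.elim_inl, Prod.mk.injEq]; omega
    · refine ⟨Sum.inr ((m + n - 1) / 2, (m - n - 1) / 2), ?_⟩
      simp only [Sum.elim_inr, Prod.mk.injEq]; omega

noncomputable def thS (s w : ℂ) : ℂ := ∑' k : ℤ, s ^ (k ^ 2) * w ^ k

lemma thS_prod {s X y : ℂ} (hs0 : s ≠ 0) (hs : ‖s‖ < 1) (hX : X ≠ 0) (hy : y ≠ 0) :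
    thS s (X * y) * thS s (X / y) =
      thS (s^2) (X^2) * thS (s^2) (y^2) + s * X * y * (thS (s^2) (s^2 * X^2) * thS (s^2) (s^2 * y^2)) := by
  have hp : ‖s ^ 2‖ < 1 := by
    rw [norm_pow]; exact pow_lt_one₀ (norm_nonneg _) hs (by norm_num)
  have hp0 : s ^ 2 ≠ 0 := pow_ne_zero _ hs0
  have s1 := summable_theta hs0 hs (mul_ne_zero hX hy)
  have s2 := summable_theta hs0 hs (div_ne_zero hX hy)
  have s3 := summable_theta hp0 hp (pow_ne_zero 2 hX)
  have s4 := summable_theta hp0 hp (pow_ne_zero 2 hy)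
  have s5 := summable_theta hp0 hp (mul_ne_zero hp0 (pow_ne_zero 2 hX))
  have s6 := summable_theta hp0 hp (mul_ne_zero hp0 (pow_ne_zero 2 hy))
  unfold thS
  rw [tsum_mul_tsum_of_summable_norm s1 s2, tsum_mul_tsum_of_summable_norm s3 s4,
    tsum_mul_tsum_of_summable_norm s5 s6, ← (Equiv.ofBijective _ par_bij).tsum_eq, ← tsum_mul_left]
  have e1 : ∀ x : ℤ × ℤ, s ^ ((x.1 + x.2) ^ 2) * (X * y) ^ (x.1 + x.2) * (s ^ ((x.1 - x.2) ^ 2) * (X / y) ^ (x.1 - x.2))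
     = (s ^ 2) ^ (x.1 ^ 2) * (X ^ 2) ^ x.1 * ((s ^ 2) ^ (x.2 ^ 2) * (y ^ 2) ^ x.2) := by
    rintro ⟨i, j⟩
    simp only [← zpow_natCast, ← zpow_mul, mul_zpow, div_zpow]
    have : ∀ A B C D E F : ℂ, A * (B * C) * (D * (E / F)) = (A * D) * (B * E) * (C / F) := by
      intros; ring
    rw [this]
    rw [← zpow_add₀ hs0, ← zpow_add₀ hX, ← zpow_sub₀ hy]
    have : ∀ A B C D : ℂ, A * B * (C * D) = A * C * B * D := by intros; ring
    rw [this, ← zpow_add₀ hs0]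
    congr 2 <;> (try congr 1) <;> push_cast <;> ring_nf
  have e2 : ∀ x : ℤ × ℤ, s ^ ((x.1 + x.2 + 1) ^ 2) * (X * y) ^ (x.1 + x.2 + 1) * (s ^ ((x.1 - x.2) ^ 2) * (X / y) ^ (x.1 - x.2))
     = s * X * y * ((s ^ 2) ^ (x.1 ^ 2) * (s ^ 2 * X ^ 2) ^ x.1 * ((s ^ 2) ^ (x.2 ^ 2) * (s ^ 2 * y ^ 2) ^ x.2)) := by
    rintro ⟨i, j⟩
    simp only [← zpow_natCast, ← zpow_mul, mul_zpow, div_zpow]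
    have : ∀ A B C D E F : ℂ, A * (B * C) * (D * (E / F)) = (A * D) * (B * E) * (C / F) := by
      intros; ring
    rw [this]
    rw [← zpow_add₀ hs0, ← zpow_add₀ hX, ← zpow_sub₀ hy]
    have : ∀ A B C D E F : ℂ, s * X * y * (A * (B * C) * (D * (E * F))) = s ^ (1:ℤ) * (A * B * D * E) * (X ^ (1:ℤ) * C) * (y ^ (1:ℤ) * F) := by
      intros; simp only [zpow_one]; ring
    rw [this]
    simp only [← zpow_add₀ hs0, ← zpow_add₀ hX, ← zpow_add₀ hy]
    congr 2 <;> (try congr 1) <;> push_cast <;> ring_nf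
  rw [Summable.tsum_sum]
  · congr 1
    · exact tsum_congr e1
    · exact tsum_congr e2
  · refine (summable_mul_of_summable_norm s3 s4).congr fun x => ?_
    exact (e1 x).symm
  · refine ((summable_mul_of_summable_norm s5 s6).mul_left (s * X * y)).congr fun x => ?_
    exact (e2 x).symm


lemma thS_shift {t x : ℂ} (ht : t ≠ 0) (hx : x ≠ 0) :
    thS t (x ^ 2 / t) = x ^ 2 * thS t (t * x ^ 2) := by
  unfold thS
  rw [← (Equiv.addRight (1 : ℤ)).tsum_eq, ← tsum_mul_left]
  refine tsum_congr fun k => ?_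
  rw [Equiv.coe_addRight, div_zpow, mul_zpow, zpow_add_one₀ (pow_ne_zero 2 hx),
    show (k + 1) ^ 2 = k ^ 2 + k + (k + 1) by ring, zpow_add₀ ht (k ^ 2 + k), zpow_add₀ ht (k ^ 2)]
  have := zpow_ne_zero (k + 1) ht
  field_simp

lemma qpoch_step {p : ℂ} (hp : ‖p‖ < 1) (z : ℂ) : qpoch z p = (1 - z) * qpoch (p * z) p := by
  have h1 := (qpoch_tendsto hp z).comp (tendsto_add_atTop_nat 1)
  have h2 := (qpoch_tendsto hp (p * z)).const_mul (1 - z)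
  refine tendsto_nhds_unique h1 (h2.congr fun n => ?_)
  simp only [Function.comp]
  rw [Finset.prod_range_succ', mul_comm]
  congr 1
  · refine Finset.prod_congr rfl fun j _ => ?_
    ring
  · simp

lemma theta_inv {p : ℂ} (hp : ‖p‖ < 1) {z : ℂ} (hz : z ≠ 0) : theta p z = -z * theta p z⁻¹ := by
  unfold theta
  rw [qpoch_step hp z, qpoch_step hp z⁻¹, inv_inv]
  field_simp
  ring

lemma theta_rank {p : ℂ} (hp : ‖p‖ < 1) : ∃ F G : ℂ → ℂ, ∀ x y : ℂ, x ≠ 0 → y ≠ 0 →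
    theta p (x * y) * theta p (x / y) = x * (F x * G y - G x * F y) := by
  by_cases h0 : p = 0
  · subst h0
    have ht : ∀ z, theta 0 z = 1 - z := by
      intro z
      unfold theta
      have h : ∀ w, qpoch w 0 = (1 - w) * qpoch 0 0 := by
        intro w
        have := qpoch_step hp w
        rwa [zero_mul] at this
      have h1 : qpoch 0 0 = 1 := by simp [qpoch]
      rw [zero_mul, h1, h z, h1]; ring
    refine ⟨fun x => x + x⁻¹, fun _ => 1, fun x y hx hy => ?_⟩
    simp only [ht]
    field_simp
    ring
  · obtain ⟨s, hs⟩ := IsAlgClosed.exists_pow_nat_eq p (n := 2) (by norm_num)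
    have hs0 : s ≠ 0 := by
      rintro rfl; apply h0; rw [← hs]; norm_num
    have hs1 : ‖s‖ < 1 := by
      rw [← hs, norm_pow] at hp
      by_contra h
      push Not at h
      nlinarith [norm_nonneg s]
    set κ := (qpoch p p)⁻¹ with hκ
    refine ⟨fun x => κ * (x * thS p (p * x ^ 2)), fun x => κ * thS p (x ^ 2), fun x y hx hy => ?_⟩
    have e : ∀ z, z ≠ 0 → theta p z = κ * thS s (-z / s) := by
      intro z hz
      have := theta_series hs0 hs1 (w := -z / s) (div_ne_zero (neg_ne_zero.mpr hz) hs0)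
      rw [hs, div_mul_cancel₀ _ hs0, neg_neg] at this
      exact this
    rw [e _ (mul_ne_zero hx hy), e _ (div_ne_zero hx hy)]
    have h := thS_prod hs0 hs1 (X := -x / s) (div_ne_zero (neg_ne_zero.mpr hx) hs0) hy
    rw [show -x / s * y = -(x * y) / s by ring, show -x / s / y = -(x / y) / s by ring, hs,
      show (-x / s) ^ 2 = x ^ 2 / p by rw [← hs]; ring, thS_shift h0 hx, mul_div_cancel₀ _ h0,
      mul_div_cancel₀ _ hs0] at h
    linear_combination κ ^ 2 * h

/-- Weierstrass three-term identity. -/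
lemma three_term {p : ℂ} (hp : ‖p‖ < 1) {u v w x : ℂ} (hu : u ≠ 0) (hv : v ≠ 0) (hw : w ≠ 0)
    (hx : x ≠ 0) :
    theta p (u * v) * theta p (u / v) * (theta p (w * x) * theta p (w / x)) =
      theta p (u * x) * theta p (u / x) * (theta p (w * v) * theta p (w / v)) -
      u / v * (theta p (v * x) * theta p (v / x) * (theta p (w * u) * theta p (w / u))) := by
  obtain ⟨F, G, h⟩ := theta_rank hp
  rw [h u v hu hv, h w x hw hx, h u x hu hx, h w v hw hv, h v x hv hx, h w u hw hu]
  field_simp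
  ring

/-- Coefficients of the elliptic binomial expansion. -/
noncomputable def ebin (p q α γ B : ℂ) (k i : ℕ) : ℂ :=
  thetaPochN p q q (k + i) / (q ^ (k * i) * thetaPochN p q q k * thetaPochN p q q i) *
    (thetaPochN p q (B * γ * q ^ i) k * thetaPochN p q (B / γ) k *
      (thetaPochN p q (B * α * q ^ k) i * thetaPochN p q (B / α) i)) /
    (thetaPochN p q (α / γ / q ^ i) k * thetaPochN p q (γ / α / q ^ k) i)

lemma tpn_zero (p q z : ℂ) : thetaPochN p q z 0 = 1 := by simp [thetaPochN]

lemma tpn_succ (p q z : ℂ) (n : ℕ) :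
    thetaPochN p q z (n + 1) = thetaPochN p q z n * theta p (z * q ^ n) := by
  simp [thetaPochN, Finset.prod_range_succ]

lemma tpn_succ' (p q z : ℂ) (n : ℕ) :
    thetaPochN p q z (n + 1) = theta p z * thetaPochN p q (z * q) n := by
  simp only [thetaPochN, Finset.prod_range_succ', pow_zero, mul_one]
  rw [mul_comm]
  congr 1
  refine Finset.prod_congr rfl fun j _ => ?_
  rw [pow_succ']; ring_nf

lemma tpn_ne {p q z : ℂ} {n : ℕ} (h : ∀ j < n, theta p (z * q ^ j) ≠ 0) : thetaPochN p q z n ≠ 0 :=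
  Finset.prod_ne_zero_iff.mpr fun j hj => h j (Finset.mem_range.mp hj)

lemma ebin_swap (p q α γ B : ℂ) (k i : ℕ) : ebin p q α γ B k i = ebin p q γ α B i k := by
  unfold ebin
  rw [add_comm, mul_comm k i]
  ring

noncomputable def eA (p q α γ B : ℂ) (k i : ℕ) : ℂ :=
  theta p (B * γ * q ^ (k + 2 * i)) * theta p (B * q ^ k / γ) / theta p (α / γ * q ^ k / q ^ i)

lemma key_ident {p q α γ B : ℂ} (hp : ‖p‖ < 1) (hq : q ≠ 0) (hα : α ≠ 0) (hγ : γ ≠ 0) (hB : B ≠ 0)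
    (k i : ℕ) :
    theta p (q ^ (k + i + 2)) * theta p (B * γ * q ^ (k + i + 1)) * theta p (B * α * q ^ (k + i + 1))
        * theta p (γ / α * q ^ i / q ^ k) =
      q ^ (i + 1) * theta p (B * γ * q ^ (k + 2 * i + 2)) * theta p (q ^ (k + 1)) * theta p (B * α * q ^ k) *
        theta p (γ / α / q ^ (k + 1))
      - γ / α * q ^ i / q ^ k * (q ^ (k + 1) * theta p (B * α * q ^ (2 * k + i + 2)) * theta p (q ^ (i + 1)) *
        theta p (B * γ * q ^ i) * theta p (α / γ / q ^ (i + 1))) := by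
  obtain ⟨ρ, hρ⟩ := IsAlgClosed.exists_pow_nat_eq (γ / α) (n := 2) (by norm_num)
  have hρ0 : ρ ≠ 0 := by
    rintro rfl
    have := div_ne_zero hγ hα
    rw [← hρ] at this; norm_num at this
  obtain rfl : γ = α * ρ ^ 2 := by rw [hρ]; field_simp
  have h := three_term hp (u := q ^ (i + 1) * ρ) (v := q ^ (k + 1) / ρ)
    (w := B * α * ρ * q ^ (k + i + 1)) (x := ρ) (by simp [*]) (by simp [*]) (by simp [*]) hρ0
  have i1 := theta_inv hp (z := α / (α * ρ ^ 2) / q ^ (i + 1)) (by simp [hα, hρ0, hq])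
  have i2 := theta_inv hp (z := (α * ρ ^ 2) / α / q ^ (k + 1)) (by simp [hα, hρ0, hq])
  rw [i1, i2]
  have a1 : q ^ (i + 1) * ρ * (q ^ (k + 1) / ρ) = q ^ (k + i + 2) := by field_simp; ring
  have a2 : q ^ (i + 1) * ρ / (q ^ (k + 1) / ρ) = α * ρ ^ 2 / α * q ^ i / q ^ k := by field_simp; ring
  have a3 : B * α * ρ * q ^ (k + i + 1) * ρ = B * (α * ρ ^ 2) * q ^ (k + i + 1) := by ring
  have a4 : B * α * ρ * q ^ (k + i + 1) / ρ = B * α * q ^ (k + i + 1) := by field_simp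
  have a5 : q ^ (i + 1) * ρ * ρ = (α / (α * ρ ^ 2) / q ^ (i + 1))⁻¹ := by field_simp
  have a6 : q ^ (i + 1) * ρ / ρ = q ^ (i + 1) := by field_simp
  have a7 : B * α * ρ * q ^ (k + i + 1) * (q ^ (k + 1) / ρ) = B * α * q ^ (2 * k + i + 2) := by
    field_simp; ring
  have a8 : B * α * ρ * q ^ (k + i + 1) / (q ^ (k + 1) / ρ) = B * (α * ρ ^ 2) * q ^ i := by
    field_simp; ring
  have a9 : q ^ (k + 1) / ρ * ρ = q ^ (k + 1) := by field_simp
  have a10 : q ^ (k + 1) / ρ / ρ = (α * ρ ^ 2 / α / q ^ (k + 1))⁻¹ := by field_simp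
  have a11 : B * α * ρ * q ^ (k + i + 1) * (q ^ (i + 1) * ρ) = B * (α * ρ ^ 2) * q ^ (k + 2 * i + 2) := by ring
  have a12 : B * α * ρ * q ^ (k + i + 1) / (q ^ (i + 1) * ρ) = B * α * q ^ k := by
    field_simp; ring
  rw [a1, a2, a3, a4, a5, a6, a7, a8, a9, a10, a11, a12] at h
  rw [show ∀ A B C D : ℂ, A * B * C * D = A * D * (B * C) by intros; ring, h]
  field_simp
  ring


lemma tpn_shift (p q z : ℂ) (n : ℕ) :
    thetaPochN p q z n * theta p (z * q ^ n) = theta p z * thetaPochN p q (z * q) n := by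
  rw [← tpn_succ, tpn_succ']

lemma ebin_rec {p q α γ B : ℂ} (hp : ‖p‖ < 1) (hq : q ≠ 0) (hα : α ≠ 0) (hγ : γ ≠ 0) (hB : B ≠ 0)
    (k i : ℕ) (hqn : ∀ j : ℕ, theta p (q * q ^ j) ≠ 0)
    (h1 : ∀ j < k + 1 + i + 1, theta p (α / γ * q ^ j / q ^ (i + 1)) ≠ 0)
    (h2 : ∀ j < k + 1 + i + 1, theta p (γ / α * q ^ j / q ^ (k + 1)) ≠ 0) :
    ebin p q α γ B (k + 1) (i + 1) = ebin p q α γ B (k + 1) i * eA p q γ α B i (k + 1) +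
      ebin p q α γ B k (i + 1) * eA p q α γ B k (i + 1) := by
  have key := key_ident hp hq hα hγ hB k i
  have R := tpn_shift p q (α / γ / q ^ (i + 1)) k
  have S := tpn_shift p q (γ / α / q ^ (k + 1)) i
  have inv := theta_inv hp (z := α / γ * q ^ k / q ^ i) (by simp [hq, hα, hγ])
  have fold1 : ∀ j : ℕ, α / γ / q ^ (i + 1) * q ^ j = α / γ * q ^ j / q ^ (i + 1) := by intros; ring
  have fold2 : ∀ j : ℕ, γ / α / q ^ (k + 1) * q ^ j = γ / α * q ^ j / q ^ (k + 1) := by intros; ring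
  have c1 : α / γ / q ^ (i + 1) * q = α / γ / q ^ i := by rw [pow_succ]; field_simp
  have c2 : γ / α / q ^ (k + 1) * q = γ / α / q ^ k := by rw [pow_succ]; field_simp
  have c3 : (α / γ * q ^ k / q ^ i)⁻¹ = γ / α * q ^ i / q ^ k := by field_simp
  rw [c1] at R
  rw [c2] at S
  rw [c3] at inv
  unfold ebin eA
  rw [show k + 1 + (i + 1) = (k + i + 1) + 1 by ring, show k + 1 + i = k + i + 1 by ring,
    show k + (i + 1) = k + i + 1 by ring, tpn_succ p q q (k + i + 1), tpn_succ p q q k, tpn_succ p q q i,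
    tpn_succ p q (B * γ * q ^ (i + 1)) k, tpn_succ' p q (B * γ * q ^ i) k, tpn_succ p q (B / γ) k,
    tpn_succ p q (B * α * q ^ (k + 1)) i, tpn_succ' p q (B * α * q ^ k) i, tpn_succ p q (B / α) i,
    tpn_succ p q (α / γ / q ^ (i + 1)) k, tpn_succ p q (γ / α / q ^ (k + 1)) i,
    tpn_succ p q (α / γ / q ^ i) k, tpn_succ p q (γ / α / q ^ k) i]
  -- normalise arguments
  rw [show B * γ * q ^ i * q = B * γ * q ^ (i + 1) by ring, show B * α * q ^ k * q = B * α * q ^ (k + 1) by ring,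
    show q * q ^ (k + i + 1) = q ^ (k + i + 2) by ring, show q * q ^ k = q ^ (k + 1) by ring,
    show q * q ^ i = q ^ (i + 1) by ring, show B * γ * q ^ (i + 1) * q ^ k = B * γ * q ^ (k + i + 1) by ring,
    show B * α * q ^ (k + 1) * q ^ i = B * α * q ^ (k + i + 1) by ring,
    show B / γ * q ^ k = B * q ^ k / γ by ring, show B / α * q ^ i = B * q ^ i / α by ring,
    show i + 2 * (k + 1) = 2 * k + i + 2 by ring, show k + 2 * (i + 1) = k + 2 * i + 2 by ring,
    show α / γ / q ^ i * q ^ k = α / γ * q ^ k / q ^ i by ring,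
    show γ / α / q ^ k * q ^ i = γ / α * q ^ i / q ^ k by ring, fold1, fold2]
  rw [fold1] at R
  rw [fold2] at S
  have n1 : theta p (α / γ * q ^ k / q ^ (i + 1)) ≠ 0 := h1 k (by omega)
  have n2 : theta p (γ / α * q ^ i / q ^ (k + 1)) ≠ 0 := h2 i (by omega)
  have n3 : theta p (γ / α * q ^ i / q ^ k) ≠ 0 := by
    have := h2 (i + 1) (by omega)
    rwa [show γ / α * q ^ (i + 1) / q ^ (k + 1) = γ / α * q ^ i / q ^ k by field_simp; ring] at this
  have n4 : theta p (α / γ * q ^ k / q ^ i) ≠ 0 := by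
    have := h1 (k + 1) (by omega)
    rwa [show α / γ * q ^ (k + 1) / q ^ (i + 1) = α / γ * q ^ k / q ^ i by field_simp; ring] at this
  have n5 : thetaPochN p q (α / γ / q ^ (i + 1)) k ≠ 0 := tpn_ne fun j hj => by
    rw [fold1]; exact h1 j (by omega)
  have n6 : thetaPochN p q (γ / α / q ^ (k + 1)) i ≠ 0 := tpn_ne fun j hj => by
    rw [fold2]; exact h2 j (by omega)
  have n7 : theta p (α / γ / q ^ (i + 1)) ≠ 0 := by simpa using h1 0 (by omega)
  have n8 : theta p (γ / α / q ^ (k + 1)) ≠ 0 := by simpa using h2 0 (by omega)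
  have n9 : thetaPochN p q q k ≠ 0 := tpn_ne fun j hj => hqn j
  have n10 : thetaPochN p q q i ≠ 0 := tpn_ne fun j hj => hqn j
  have n11 : theta p (q ^ (k + 1)) ≠ 0 := by rw [pow_succ']; exact hqn k
  have n12 : theta p (q ^ (i + 1)) ≠ 0 := by rw [pow_succ']; exact hqn i
  have R' : thetaPochN p q (α / γ / q ^ i) k = thetaPochN p q (α / γ / q ^ (i + 1)) k *
    theta p (α / γ * q ^ k / q ^ (i + 1)) / theta p (α / γ / q ^ (i + 1)) := by
    rw [R, mul_div_cancel_left₀ _ n7]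
  have S' : thetaPochN p q (γ / α / q ^ k) i = thetaPochN p q (γ / α / q ^ (k + 1)) i *
    theta p (γ / α * q ^ i / q ^ (k + 1)) / theta p (γ / α / q ^ (k + 1)) := by
    rw [S, mul_div_cancel_left₀ _ n8]
  rw [R', S', inv]
  clear R S R' S' inv fold1 fold2 c1 c2 c3 h1 h2 hqn
  have d1 : q ^ ((k + 1) * (i + 1)) = q ^ (k * i) * q ^ k * q ^ i * q := by ring
  have d2 : q ^ ((k + 1) * i) = q ^ (k * i) * q ^ i := by ring
  have d3 : q ^ (k * (i + 1)) = q ^ (k * i) * q ^ k := by ring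
  rw [d1, d2, d3]
  have d4 : q ^ (k * i) ≠ 0 := pow_ne_zero _ hq
  have key2 : theta p (q ^ (k + i + 2)) * theta p (B * γ * q ^ (k + i + 1)) * theta p (B * α * q ^ (k + i + 1))
        =
      q ^ (i + 1) * theta p (B * γ * q ^ (k + 2 * i + 2)) * theta p (q ^ (k + 1)) * theta p (B * α * q ^ k) *
        theta p (γ / α / q ^ (k + 1)) / theta p (γ / α * q ^ i / q ^ k)
      - γ / α * q ^ i / q ^ k * (q ^ (k + 1) * theta p (B * α * q ^ (2 * k + i + 2)) * theta p (q ^ (i + 1)) *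
        theta p (B * γ * q ^ i) * theta p (α / γ / q ^ (i + 1))) / theta p (γ / α * q ^ i / q ^ k) := by
    rw [← sub_div, ← key, mul_div_cancel_right₀ _ n3]
  clear key
  generalize theta p (q ^ (k + i + 2)) = t1 at *
  generalize theta p (B * γ * q ^ (k + i + 1)) = t2 at *
  generalize theta p (B * α * q ^ (k + i + 1)) = t3 at *
  generalize theta p (B * γ * q ^ (k + 2 * i + 2)) = t4 at *
  generalize theta p (q ^ (k + 1)) = t5 at *
  generalize theta p (B * α * q ^ k) = t6 at *
  generalize theta p (γ / α / q ^ (k + 1)) = t7 at *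
  generalize theta p (γ / α * q ^ i / q ^ k) = t8 at *
  generalize theta p (B * α * q ^ (2 * k + i + 2)) = t9 at *
  generalize theta p (q ^ (i + 1)) = t10 at *
  generalize theta p (B * γ * q ^ i) = t11 at *
  generalize theta p (α / γ / q ^ (i + 1)) = t12 at *
  generalize theta p (α / γ * q ^ k / q ^ (i + 1)) = t13 at *
  generalize theta p (γ / α * q ^ i / q ^ (k + 1)) = t14 at *
  generalize theta p (B * q ^ k / γ) = t15 at *
  generalize theta p (B * q ^ i / α) = t16 at *
  generalize thetaPochN p q q (k + i + 1) = s1 at *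
  generalize thetaPochN p q q k = s2 at *
  generalize thetaPochN p q q i = s3 at *
  generalize thetaPochN p q (B * γ * q ^ (i + 1)) k = s4 at *
  generalize thetaPochN p q (B / γ) k = s5 at *
  generalize thetaPochN p q (B * α * q ^ (k + 1)) i = s6 at *
  generalize thetaPochN p q (B / α) i = s7 at *
  generalize thetaPochN p q (α / γ / q ^ (i + 1)) k = s8 at *
  generalize thetaPochN p q (γ / α / q ^ (k + 1)) i = s9 at *
  generalize q ^ (k * i) = Q at *
  rw [pow_succ, pow_succ] at key2
  have hk : q ^ k ≠ 0 := pow_ne_zero _ hq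
  have hi : q ^ i ≠ 0 := pow_ne_zero _ hq
  generalize q ^ k = qk at *
  generalize q ^ i = qi at *
  trans (s1 / (Q * qk * qi * q * (s2 * t5) * (s3 * t10)) * (s4 * (s5 * t15) * (s6 * (s7 * t16)))
    / (s8 * t13 * (s9 * t14))) * (t1 * t2 * t3)
  · ring
  · rw [key2]
    field_simp
    ring


lemma ebin_top {p q α γ B : ℂ} (m : ℕ) (hqn : ∀ j : ℕ, theta p (q * q ^ j) ≠ 0) :
    ebin p q α γ B (m + 1) 0 = ebin p q α γ B m 0 * eA p q α γ B m 0 := by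
  have n1 : thetaPochN p q q m ≠ 0 := tpn_ne fun j hj => hqn j
  have n2 : thetaPochN p q q (m + 1) ≠ 0 := tpn_ne fun j hj => hqn j
  unfold ebin eA
  simp only [tpn_zero, add_zero, mul_zero, pow_zero, mul_one, one_mul, div_one, div_self n1, div_self n2]
  rw [tpn_succ, tpn_succ, tpn_succ, show B / γ * q ^ m = B * q ^ m / γ by ring]
  ring

lemma eA_split {p q α γ B x : ℂ} (hp : ‖p‖ < 1) (hq : q ≠ 0) (hα : α ≠ 0) (hγ : γ ≠ 0) (hB : B ≠ 0)
    (hx : x ≠ 0) (k i : ℕ) (h1 : theta p (α / γ * q ^ k / q ^ i) ≠ 0) :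
    theta p (α * γ * q ^ (k + i)) * (theta p (B * x * q ^ (k + i)) * theta p (B / x * q ^ (k + i))) =
      eA p q γ α B i k * (theta p (γ * x * q ^ i) * theta p (γ / x * q ^ i)) +
      eA p q α γ B k i * (theta p (α * x * q ^ k) * theta p (α / x * q ^ k)) := by
  have h := three_term hp (u := α * q ^ k) (v := γ * q ^ i) (w := B * q ^ (k + i)) (x := x)
    (by simp [hα, hq]) (by simp [hγ, hq]) (by simp [hB, hq]) hx
  have inv := theta_inv hp (z := α / γ * q ^ k / q ^ i) (by simp [hq, hα, hγ])
  have a1 : α * q ^ k * (γ * q ^ i) = α * γ * q ^ (k + i) := by ring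
  have a2 : α * q ^ k / (γ * q ^ i) = α / γ * q ^ k / q ^ i := by field_simp
  have a3 : B * q ^ (k + i) * x = B * x * q ^ (k + i) := by ring
  have a4 : B * q ^ (k + i) / x = B / x * q ^ (k + i) := by ring
  have a5 : α * q ^ k * x = α * x * q ^ k := by ring
  have a6 : α * q ^ k / x = α / x * q ^ k := by ring
  have a7 : B * q ^ (k + i) * (γ * q ^ i) = B * γ * q ^ (k + 2 * i) := by ring
  have a8 : B * q ^ (k + i) / (γ * q ^ i) = B * q ^ k / γ := by rw [pow_add]; field_simp
  have a9 : γ * q ^ i * x = γ * x * q ^ i := by ring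
  have a10 : γ * q ^ i / x = γ / x * q ^ i := by ring
  have a11 : B * q ^ (k + i) * (α * q ^ k) = B * α * q ^ (i + 2 * k) := by ring
  have a12 : B * q ^ (k + i) / (α * q ^ k) = B * q ^ i / α := by rw [pow_add]; field_simp
  rw [a1, a2, a3, a4, a5, a6, a7, a8, a9, a10, a11, a12] at h
  have c3 : (α / γ * q ^ k / q ^ i)⁻¹ = γ / α * q ^ i / q ^ k := by field_simp
  rw [c3] at inv
  unfold eA
  have n3 : theta p (γ / α * q ^ i / q ^ k) ≠ 0 := by
    intro h0; rw [h0, mul_zero] at inv; exact h1 inv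
  apply mul_right_cancel₀ h1
  rw [show ∀ a b c d : ℂ, a * (b * c) * d = a * d * (b * c) by intros; ring, h, add_mul]
  have hz : α / γ * q ^ k / q ^ i ≠ 0 := by simp [hq, hα, hγ]
  generalize α / γ * q ^ k / q ^ i = z at *
  rw [show ∀ a b c d e : ℂ, a / b * (c * d) * e = a * c * d * e / b by intros; ring,
    show ∀ a b c d e : ℂ, a / b * (c * d) * e = a * c * d * e / b by intros; ring,
    mul_div_cancel_right₀ _ h1, inv]
  rw [show ∀ a b z c : ℂ, a * (-z * b) / c = a * (-z) * b / c by intros; ring, mul_div_cancel_right₀ _ n3]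
  ring

theorem elliptic_binomial {p q α γ B x : ℂ} (hp : ‖p‖ < 1) (hq : q ≠ 0) (hα : α ≠ 0) (hγ : γ ≠ 0)
    (hB : B ≠ 0) (hx : x ≠ 0) (hqn : ∀ j : ℕ, theta p (q * q ^ j) ≠ 0) (m : ℕ)
    (hr : ∀ j i : ℕ, i ≤ m → theta p (α / γ * q ^ j / q ^ i) ≠ 0) :
    thetaPochN p q (α * γ) m * (thetaPochN p q (B * x) m * thetaPochN p q (B / x) m) =
      ∑ k ∈ Finset.range (m + 1), ebin p q α γ B k (m - k) *
        (thetaPochN p q (α * x) k * thetaPochN p q (α / x) k *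
          (thetaPochN p q (γ * x) (m - k) * thetaPochN p q (γ / x) (m - k))) := by
  induction m with
  | zero => simp [tpn_zero, ebin]
  | succ m ih =>
    have ih := ih (fun j i hi => hr j i (by omega))
    have hr2 : ∀ j i : ℕ, j ≤ m + 1 → theta p (γ / α * q ^ j / q ^ i) ≠ 0 := by
      intro j i hj h0
      apply hr i j hj
      have hz : α / γ * q ^ i / q ^ j ≠ 0 := by simp [hq, hα, hγ]
      rw [theta_inv hp hz, show (α / γ * q ^ i / q ^ j)⁻¹ = γ / α * q ^ j / q ^ i by field_simp, h0, mul_zero]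
    rw [tpn_succ, tpn_succ, tpn_succ, show ∀ a b c d e f : ℂ, a * b * (c * d * (e * f)) = a * (c * e) * (b * (d * f)) by
      intros; ring, ih, Finset.sum_mul]
    have step : ∀ k ∈ Finset.range (m + 1), ebin p q α γ B k (m - k) *
        (thetaPochN p q (α * x) k * thetaPochN p q (α / x) k *
          (thetaPochN p q (γ * x) (m - k) * thetaPochN p q (γ / x) (m - k))) *
          (theta p (α * γ * q ^ m) * (theta p (B * x * q ^ m) * theta p (B / x * q ^ m))) =
        ebin p q α γ B k (m - k) * eA p q γ α B (m - k) k *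
        (thetaPochN p q (α * x) k * thetaPochN p q (α / x) k *
          (thetaPochN p q (γ * x) (m - k + 1) * thetaPochN p q (γ / x) (m - k + 1))) +
        ebin p q α γ B k (m - k) * eA p q α γ B k (m - k) *
        (thetaPochN p q (α * x) (k + 1) * thetaPochN p q (α / x) (k + 1) *
          (thetaPochN p q (γ * x) (m - k) * thetaPochN p q (γ / x) (m - k))) := by
      intro k hk
      obtain ⟨i, rfl⟩ : ∃ i, m = k + i := ⟨m - k, by have := Finset.mem_range.mp hk; omega⟩
      rw [show k + i - k = i by omega, eA_split hp hq hα hγ hB hx k i (hr k i (by omega)),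
        tpn_succ, tpn_succ, tpn_succ, tpn_succ]
      ring
    rw [Finset.sum_congr rfl step]
    apply pascal_sum
    · rw [ebin_swap p q α γ, ebin_swap p q α γ]
      simp only [Nat.sub_zero]
      rw [ebin_top m hqn]
    · simp only [Nat.sub_self]
      rw [ebin_top m hqn]
    · intro k hk
      obtain ⟨i, rfl⟩ : ∃ i, m = k + i + 1 := ⟨m - k - 1, by omega⟩
      rw [show k + i + 1 + 1 - (k + 1) = i + 1 by omega, show k + i + 1 - (k + 1) = i by omega,
        show k + i + 1 - k = i + 1 by omega, ebin_rec hp hq hα hγ hB k i hqn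
          (fun j hj => hr j (i + 1) (by omega)) (fun j hj => hr2 j (k + 1) (by omega))]
      ring


/-- The product of the powers `q ^ j` for `j < n`. -/
noncomputable def qtri (q : ℂ) (n : ℕ) : ℂ := ∏ j ∈ Finset.range n, q ^ j

/-- The monomial factor that appears when an elliptic Pochhammer symbol is reversed. -/
noncomputable def mrev (q z : ℂ) (n : ℕ) : ℂ := (-z) ^ n * qtri q n

lemma qtri_succ (q : ℂ) (n : ℕ) : qtri q (n + 1) = qtri q n * q ^ n := by
  simp [qtri, Finset.prod_range_succ]

lemma qtri_ne {q : ℂ} (hq : q ≠ 0) (n : ℕ) : qtri q n ≠ 0 := by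
  simp [qtri, Finset.prod_ne_zero_iff, hq]

lemma mrev_ne {q z : ℂ} (hq : q ≠ 0) (hz : z ≠ 0) (n : ℕ) : mrev q z n ≠ 0 := by
  simp [mrev, qtri_ne hq, hz]

lemma qtri_add (q : ℂ) (n i : ℕ) : qtri q (n + i) = qtri q n * qtri q i * q ^ (n * i) := by
  induction i with
  | zero => simp [qtri]
  | succ i ih => rw [← add_assoc, qtri_succ, ih, qtri_succ]; ring

lemma qtri_sq (q : ℂ) (n : ℕ) : qtri q n ^ 2 * q ^ n = q ^ (n * n) := by
  induction n with
  | zero => simp [qtri]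
  | succ i ih =>
    rw [qtri_succ, show (i + 1) * (i + 1) = i * i + (2 * i + 1) by ring, pow_add q (i * i), ← ih]; ring

lemma tpn_add (p q z : ℂ) (n i : ℕ) :
    thetaPochN p q z (n + i) = thetaPochN p q z n * thetaPochN p q (z * q ^ n) i := by
  induction i with
  | zero => simp [tpn_zero]
  | succ i ih =>
    rw [← add_assoc, tpn_succ, ih, tpn_succ, pow_add]; ring_nf

lemma tpn_rev {p q z : ℂ} (hp : ‖p‖ < 1) (hq : q ≠ 0) (hz : z ≠ 0) (n : ℕ) :
    thetaPochN p q z n = mrev q z n * thetaPochN p q (q / (z * q ^ n)) n := by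
  induction n with
  | zero => simp [tpn_zero, mrev, qtri]
  | succ n ih =>
    rw [tpn_succ, ih, tpn_succ', theta_inv hp (z := z * q ^ n) (by simp [hz, hq])]
    have e1 : q / (z * q ^ (n + 1)) = (z * q ^ n)⁻¹ := by rw [pow_succ]; field_simp
    have e2 : (z * q ^ n)⁻¹ * q = q / (z * q ^ n) := by field_simp
    rw [e1, e2]
    simp only [mrev, qtri_succ]
    ring

lemma mono_term {q a b c d e : ℂ} (hq : q ≠ 0) (ha : a ≠ 0) (n i : ℕ)
    (hbal : b * c * d * e = a ^ 2 * q ^ (n + i + 1)) :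
    mrev q (q * q ^ i) n * mrev q (b / (a * q ^ (n + i))) (n + i) * mrev q (c / (a * q ^ (n + i))) (n + i) *
      mrev q (d / (a * q ^ (n + i))) (n + i) * e ^ (n + i) =
    q ^ n * (q ^ (n * i) * mrev q e n * mrev q (b / (a * q ^ n)) n * mrev q (c / (a * q ^ n)) n *
      mrev q (d / (a * q ^ n)) n * mrev q (1 / (a * q ^ (n + i + n))) i) := by
  have h1 : (b * c * d * e) ^ i = a ^ (2 * i) * (q ^ (n * i) * q ^ (i * i) * q ^ i) := by
    rw [hbal]; ring
  have h2 := qtri_sq q i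
  simp only [mrev, qtri_add, mul_pow, div_pow, neg_pow (_ / _), neg_pow e, neg_pow (q * _), ← pow_mul]
  simp only [mul_pow] at h1
  have s1 : ((-1 : ℂ) ^ n) ^ 2 = 1 := by rw [← pow_mul, mul_comm, pow_mul]; simp
  have s2 : ((-1 : ℂ) ^ i) ^ 2 = 1 := by rw [← pow_mul, mul_comm, pow_mul]; simp
  rw [show (n + i) * (n + i) = n * n + n * i + n * i + i * i by ring,
    show (n + i + n) * i = n * i + n * i + i * i by ring, show i * n = n * i by ring]
  simp only [pow_add]
  rw [show a ^ (2 * i) = (a ^ i) ^ 2 by ring] at h1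
  have A1 := pow_ne_zero n ha
  have A2 := pow_ne_zero i ha
  have Q1 := pow_ne_zero n hq
  have Q2 := pow_ne_zero i hq
  have Q3 := pow_ne_zero (n * n) hq
  have Q4 := pow_ne_zero (n * i) hq
  have Q5 := pow_ne_zero (i * i) hq
  rw [← h2] at h1 Q5 ⊢
  simp only [one_pow]
  generalize qtri q n = cn at *
  generalize qtri q i = ci at *
  generalize a ^ n = an at *
  generalize a ^ i = ai at *
  generalize q ^ n = qn at *
  generalize q ^ i = qi at *
  generalize q ^ (n * n) = qnn at *
  generalize q ^ (n * i) = qni at *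
  generalize (-1 : ℂ) ^ n = sn at *
  generalize (-1 : ℂ) ^ i = si at *
  generalize b ^ n = bn at *
  generalize b ^ i = bi at *
  generalize c ^ n = cbn at *
  generalize c ^ i = cbi at *
  generalize d ^ n = dn at *
  generalize d ^ i = di at *
  generalize e ^ n = en at *
  generalize e ^ i = ei at *
  have hci : ci ≠ 0 := by rintro rfl; simp at Q5
  have S1 : sn ≠ 0 := by rintro rfl; simp at s1
  have S2 : si ≠ 0 := by rintro rfl; simp at s2
  field_simp
  rw [s2]
  linear_combination cn ^ 4 * bn * cbn * dn * en * h1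

lemma mono_final {q a b c d e : ℂ} (hq : q ≠ 0) (ha : a ≠ 0) (N : ℕ)
    (hbal : b * c * d * e = a ^ 2 * q ^ (N + 1)) :
    mrev q (b * c / (a * q ^ N)) N * mrev q (b * d / (a * q ^ N)) N * mrev q (c * d / (a * q ^ N)) N *
      (e ^ N * mrev q (e / (a * q ^ N)) N) = 1 := by
  have h1 : (b * c * d * e) ^ N = a ^ (2 * N) * (q ^ (N * N) * q ^ N) := by
    rw [hbal]; ring
  have h2 := qtri_sq q N
  simp only [mrev, mul_pow, div_pow, neg_pow (_ / _), ← pow_mul]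
  simp only [mul_pow] at h1
  have s1 : ((-1 : ℂ) ^ N) ^ 2 = 1 := by rw [← pow_mul, mul_comm, pow_mul]; simp
  rw [show a ^ (2 * N) = (a ^ N) ^ 2 by ring] at h1
  have A1 := pow_ne_zero N ha
  have Q1 := pow_ne_zero N hq
  have Q5 := pow_ne_zero (N * N) hq
  rw [← h2] at h1 Q5 ⊢
  generalize qtri q N = ci at *
  generalize a ^ N = ai at *
  generalize q ^ N = qi at *
  generalize (-1 : ℂ) ^ N = si at *
  generalize b ^ N = bi at *
  generalize c ^ N = cbi at *
  generalize d ^ N = di at *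
  generalize e ^ N = ei at *
  have hci : ci ≠ 0 := by rintro rfl; simp at Q5
  field_simp
  rw [show si ^ 4 = (si ^ 2) ^ 2 by ring, s1]
  linear_combination (bi * cbi * di * ei + ai ^ 2 * (ci ^ 2 * qi * qi)) * h1


lemma rev_pair {p q a z : ℂ} (hp : ‖p‖ < 1) (hq : q ≠ 0) (ha : a ≠ 0) (hz : z ≠ 0) (n i : ℕ) :
    thetaPochN p q (z / (a * q ^ (n + i))) i *
      (mrev q (z / (a * q ^ n)) n * thetaPochN p q (a * q / z) n) =
    mrev q (z / (a * q ^ (n + i))) (n + i) * thetaPochN p q (a * q / z) (n + i) := by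
  have r1 := tpn_rev hp hq (z := z / (a * q ^ n)) (by simp [hz, ha, hq]) n
  have r2 := tpn_rev hp hq (z := z / (a * q ^ (n + i))) (by simp [hz, ha, hq]) (n + i)
  have s := tpn_add p q (z / (a * q ^ (n + i))) i n
  rw [show q / (z / (a * q ^ n) * q ^ n) = a * q / z by field_simp] at r1
  rw [show q / (z / (a * q ^ (n + i)) * q ^ (n + i)) = a * q / z by field_simp] at r2
  rw [show z / (a * q ^ (n + i)) * q ^ i = z / (a * q ^ n) by rw [pow_add]; field_simp,
    add_comm i n] at s
  rw [← r1, ← r2, s]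

lemma rev_q {p q : ℂ} (hp : ‖p‖ < 1) (hq : q ≠ 0) (n i : ℕ) :
    thetaPochN p q q i * (mrev q (q * q ^ i) n * thetaPochN p q (q ^ (-((n + i : ℕ) : ℤ))) n) =
      thetaPochN p q q (n + i) := by
  have r1 := tpn_rev hp hq (z := q * q ^ i) (by simp [hq]) n
  rw [show q / (q * q ^ i * q ^ n) = q ^ (-((n + i : ℕ) : ℤ)) by
    rw [zpow_neg, zpow_natCast, pow_add]; field_simp] at r1
  rw [← r1, add_comm n i, tpn_add]

lemma rev_a (p q a : ℂ) (n i : ℕ) :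
    thetaPochN p q a n * thetaPochN p q (a * q ^ n) n * theta p (a * q ^ (2 * n)) *
      thetaPochN p q (a * q ^ (2 * n + 1)) i =
    theta p a * thetaPochN p q (a * q) (n + i) * thetaPochN p q (a * q ^ (n + i + 1)) n := by
  have s1 := tpn_add p q a n n
  have s2 := tpn_add p q a (n + n) (1 + i)
  have s3 := tpn_succ' p q (a * q ^ (n + n)) i
  have s4 := tpn_succ' p q a (n + i + n)
  have s5 := tpn_add p q (a * q) (n + i) n
  rw [add_comm 1 i, s3] at s2
  rw [s5, show n + i + n + 1 = n + n + (i + 1) by ring, s2, s1] at s4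
  rw [show 2 * n = n + n by ring, show a * q ^ (n + n + 1) = a * q ^ (n + n) * q by ring,
    show a * q ^ (n + i + 1) = a * q * q ^ (n + i) by ring]
  linear_combination s4

lemma ft_term {p q a b c d e : ℂ} (hp : ‖p‖ < 1)
    (hq0 : q ≠ 0) (ha : a ≠ 0) (hb : b ≠ 0) (hc : c ≠ 0) (hd : d ≠ 0) (he : e ≠ 0)
    (n i : ℕ) (hbal : b * c * d * e = a ^ 2 * q ^ (n + i + 1))
    (hgq : ∀ j : ℕ, theta p (q * q ^ j) ≠ 0) (hga : ∀ j : ℕ, theta p (a * q ^ j) ≠ 0)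
    (hgb : ∀ j : ℕ, theta p (a * q / b * q ^ j) ≠ 0) (hgc : ∀ j : ℕ, theta p (a * q / c * q ^ j) ≠ 0)
    (hgd : ∀ j : ℕ, theta p (a * q / d * q ^ j) ≠ 0) (hge : ∀ j : ℕ, theta p (a * q / e * q ^ j) ≠ 0) :
    thetaPochN p q q (n + i) / (q ^ (n * i) * thetaPochN p q q n * thetaPochN p q q i) *
      (thetaPochN p q (q / (e * q ^ n)) n * thetaPochN p q d n *
        (thetaPochN p q (a * q / e * q ^ n) i * thetaPochN p q (d / (a * q ^ (n + i))) i)) /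
      (thetaPochN p q (a * q ^ n) n * thetaPochN p q (1 / (a * q ^ (n + i + n))) i) *
      (thetaPochN p q b n * thetaPochN p q c n *
        (thetaPochN p q (b / (a * q ^ (n + i))) i * thetaPochN p q (c / (a * q ^ (n + i))) i)) =
    (thetaPochN p q (a * q / e) (n + i) * thetaPochN p q (a * q / d) (n + i) *
      thetaPochN p q (a * q / b) (n + i) * thetaPochN p q (a * q / c) (n + i) /
        (e ^ (n + i) * thetaPochN p q (a * q) (n + i))) *
    (theta p (a * q ^ (2 * n)) / theta p a *
          (thetaPochN p q a n * thetaPochN p q b n * thetaPochN p q c n * thetaPochN p q d n *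
            thetaPochN p q e n * thetaPochN p q (q ^ (-((n + i : ℕ) : ℤ))) n) /
          (thetaPochN p q q n * thetaPochN p q (a * q / b) n * thetaPochN p q (a * q / c) n *
            thetaPochN p q (a * q / d) n * thetaPochN p q (a * q / e) n *
            thetaPochN p q (a * q ^ (n + i + 1)) n) * q ^ n) := by
  have Rb := rev_pair hp hq0 ha hb n i
  have Rc := rev_pair hp hq0 ha hc n i
  have Rd := rev_pair hp hq0 ha hd n i
  have Rq := rev_q hp hq0 n i
  have Ra := rev_a p q a n i
  have Re := tpn_rev hp hq0 he n
  have Se := tpn_add p q (a * q / e) n i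
  have R1 := tpn_rev hp hq0 (z := 1 / (a * q ^ (n + i + n))) (by simp [ha, hq0]) i
  rw [show q / (1 / (a * q ^ (n + i + n)) * q ^ i) = a * q ^ (2 * n + 1) by
    rw [show n + i + n = 2 * n + i by ring, pow_add, pow_add]; field_simp] at R1
  have M := mono_term hq0 ha n i hbal
  have m1 := mrev_ne hq0 (z := b / (a * q ^ n)) (by simp [ha, hq0, hb]) n
  have m2 := mrev_ne hq0 (z := c / (a * q ^ n)) (by simp [ha, hq0, hc]) n
  have m3 := mrev_ne hq0 (z := d / (a * q ^ n)) (by simp [ha, hq0, hd]) n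
  have m4 := mrev_ne hq0 (z := 1 / (a * q ^ (n + i + n))) (by simp [ha, hq0]) i
  have m5 := mrev_ne hq0 he n
  have z1 : thetaPochN p q q n ≠ 0 := tpn_ne fun j _ => hgq j
  have z2 : thetaPochN p q q i ≠ 0 := tpn_ne fun j _ => hgq j
  have z3 : thetaPochN p q (a * q / b) n ≠ 0 := tpn_ne fun j _ => hgb j
  have z4 : thetaPochN p q (a * q / c) n ≠ 0 := tpn_ne fun j _ => hgc j
  have z5 : thetaPochN p q (a * q / d) n ≠ 0 := tpn_ne fun j _ => hgd j
  have z6 : thetaPochN p q (a * q / e) n ≠ 0 := tpn_ne fun j _ => hge j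
  have z7 : thetaPochN p q (a * q ^ n) n ≠ 0 := tpn_ne fun j _ => by
    rw [mul_assoc, ← pow_add]; exact hga _
  have z8 : thetaPochN p q (a * q ^ (2 * n + 1)) i ≠ 0 := tpn_ne fun j _ => by
    rw [mul_assoc, ← pow_add]; exact hga _
  have z9 : thetaPochN p q (a * q ^ (n + i + 1)) n ≠ 0 := tpn_ne fun j _ => by
    rw [mul_assoc, ← pow_add]; exact hga _
  have z10 : thetaPochN p q (a * q) (n + i) ≠ 0 := tpn_ne fun j _ => by
    rw [mul_assoc, ← pow_succ']; exact hga _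
  have z11 : theta p a ≠ 0 := by simpa using hga 0
  have z12 := pow_ne_zero (n + i) he
  have z13 := pow_ne_zero (n * i) hq0
  rw [R1, ← Rq, Se, Re]
  clear R1 Rq Se Re hbal hgq hga hgb hgc hgd hge
  generalize mrev q (b / (a * q ^ n)) n = M1 at *
  generalize mrev q (c / (a * q ^ n)) n = M2 at *
  generalize mrev q (d / (a * q ^ n)) n = M3 at *
  generalize mrev q (1 / (a * q ^ (n + i + n))) i = M4 at *
  generalize mrev q e n = M5 at *
  generalize mrev q (q * q ^ i) n = M6 at *
  generalize mrev q (b / (a * q ^ (n + i))) (n + i) = M7 at *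
  generalize mrev q (c / (a * q ^ (n + i))) (n + i) = M8 at *
  generalize mrev q (d / (a * q ^ (n + i))) (n + i) = M9 at *
  generalize thetaPochN p q q n = Z1 at *
  generalize thetaPochN p q q i = Z2 at *
  generalize thetaPochN p q (a * q / b) n = Z3 at *
  generalize thetaPochN p q (a * q / c) n = Z4 at *
  generalize thetaPochN p q (a * q / d) n = Z5 at *
  generalize thetaPochN p q (a * q / e) n = Z6 at *
  generalize thetaPochN p q (a * q ^ n) n = Z7 at *
  generalize thetaPochN p q (a * q ^ (2 * n + 1)) i = Z8 at *
  generalize thetaPochN p q (a * q ^ (n + i + 1)) n = Z9 at *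
  generalize thetaPochN p q (a * q) (n + i) = Z10 at *
  generalize theta p a = Z11 at *
  generalize e ^ (n + i) = Z12 at *
  generalize q ^ (n * i) = Z13 at *
  generalize thetaPochN p q (a * q / b) (n + i) = B1 at *
  generalize thetaPochN p q (a * q / c) (n + i) = C1 at *
  generalize thetaPochN p q (a * q / d) (n + i) = D1 at *
  generalize thetaPochN p q (b / (a * q ^ (n + i))) i = B2 at *
  generalize thetaPochN p q (c / (a * q ^ (n + i))) i = C2 at *
  generalize thetaPochN p q (d / (a * q ^ (n + i))) i = D2 at *
  generalize thetaPochN p q b n = B3 at *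
  generalize thetaPochN p q c n = C3 at *
  generalize thetaPochN p q d n = D3 at *
  generalize thetaPochN p q a n = A3 at *
  generalize theta p (a * q ^ (2 * n)) = A4 at *
  generalize thetaPochN p q (q ^ (-((n + i : ℕ) : ℤ))) n = F1 at *
  generalize thetaPochN p q (q / (e * q ^ n)) n = F2 at *
  generalize thetaPochN p q (a * q / e * q ^ n) i = F3 at *
  generalize q ^ n = F4 at *
  have hB : B2 = M7 * B1 / (M1 * Z3) := by rw [← Rb]; field_simp
  have hC : C2 = M8 * C1 / (M2 * Z4) := by rw [← Rc]; field_simp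
  have hD : D2 = M9 * D1 / (M3 * Z5) := by rw [← Rd]; field_simp
  rw [hB, hC, hD]
  field_simp
  linear_combination (F1 * F2 * D3 * F3 * D1 * B3 * C3 * B1 * C1) *
    (Z9 * Z10 * Z11 * M - F4 * (Z13 * M5 * M1 * M2 * M3 * M4) * Ra)


theorem frenkel_turaev_summation (p q a b c d e : ℂ) (hp : ‖p‖ < 1) (hq : ‖q‖ < 1)
    (hq0 : q ≠ 0) (ha : a ≠ 0) (hb : b ≠ 0) (hc : c ≠ 0) (hd : d ≠ 0) (he : e ≠ 0)
    (N : ℕ) (hbal : b * c * d * e = a ^ 2 * q ^ (N + 1))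
    (hgen : ∀ x ∈ ({q, a, a * q / b, a * q / c, a * q / d, a * q / e, a * q ^ (N + 1),
        a * q / (b * c * d)} : Set ℂ), ∀ j : ℕ, theta p (x * q ^ j) ≠ 0) :
    ∑ n ∈ Finset.range (N + 1),
        theta p (a * q ^ (2 * n)) / theta p a *
          (thetaPochN p q a n * thetaPochN p q b n * thetaPochN p q c n * thetaPochN p q d n *
            thetaPochN p q e n * thetaPochN p q (q ^ (-(N : ℤ))) n) /
          (thetaPochN p q q n * thetaPochN p q (a * q / b) n * thetaPochN p q (a * q / c) n *
            thetaPochN p q (a * q / d) n * thetaPochN p q (a * q / e) n *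
            thetaPochN p q (a * q ^ (N + 1)) n) * q ^ n
      = thetaPochN p q (a * q) N * thetaPochN p q (a * q / (b * c)) N *
          thetaPochN p q (a * q / (b * d)) N * thetaPochN p q (a * q / (c * d)) N /
          (thetaPochN p q (a * q / b) N * thetaPochN p q (a * q / c) N *
            thetaPochN p q (a * q / d) N * thetaPochN p q (a * q / (b * c * d)) N) := by
  have hgq : ∀ j : ℕ, theta p (q * q ^ j) ≠ 0 := hgen q (by simp)
  have hga : ∀ j : ℕ, theta p (a * q ^ j) ≠ 0 := hgen a (by simp)
  have hgb : ∀ j : ℕ, theta p (a * q / b * q ^ j) ≠ 0 := hgen _ (by simp)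
  have hgc : ∀ j : ℕ, theta p (a * q / c * q ^ j) ≠ 0 := hgen _ (by simp)
  have hgd : ∀ j : ℕ, theta p (a * q / d * q ^ j) ≠ 0 := hgen _ (by simp)
  have hge : ∀ j : ℕ, theta p (a * q / e * q ^ j) ≠ 0 := hgen _ (by simp)
  have hgf : ∀ j : ℕ, theta p (a * q / (b * c * d) * q ^ j) ≠ 0 := hgen _ (by simp)
  obtain ⟨α, hα2⟩ := IsAlgClosed.exists_pow_nat_eq (b * c) (n := 2) (by norm_num)
  have hα : α ≠ 0 := by
    rintro rfl
    have : b * c ≠ 0 := mul_ne_zero hb hc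
    exact this (by rw [← hα2]; simp)
  have qN : q ^ N ≠ 0 := pow_ne_zero N hq0
  have hγ : α / (a * q ^ N) ≠ 0 := by simp [hα, ha, hq0]
  have H := elliptic_binomial (p := p) (q := q) (α := α) (γ := α / (a * q ^ N))
    (B := α / (a * q ^ N) * d) (x := b / α) hp hq0 hα hγ (mul_ne_zero hγ hd)
    (div_ne_zero hb hα) hgq N (by
      intro j i hi
      obtain ⟨k, rfl⟩ : ∃ k, N = i + k := ⟨N - i, by omega⟩
      rw [show α / (α / (a * q ^ (i + k))) * q ^ j / q ^ i = a * q ^ (k + j) by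
        rw [pow_add, pow_add]; field_simp]
      exact hga _)
  have f1 : α * (α / (a * q ^ N)) = b * c / (a * q ^ N) := by rw [← hα2]; ring
  have f2 : α / (a * q ^ N) * d * (b / α) = b * d / (a * q ^ N) := by field_simp
  have f3 : α / (a * q ^ N) * d / (b / α) = c * d / (a * q ^ N) := by
    field_simp; linear_combination hα2
  have f4 : α * (b / α) = b := by field_simp
  have f5 : α / (b / α) = c := by field_simp; linear_combination hα2
  have f6 : α / (a * q ^ N) * (b / α) = b / (a * q ^ N) := by field_simp
  have f7 : α / (a * q ^ N) / (b / α) = c / (a * q ^ N) := by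
    field_simp; linear_combination hα2
  have f8 : α / (a * q ^ N) * d / (α / (a * q ^ N)) = d := by field_simp
  have f9 : α / (a * q ^ N) * d * α = a * q / e := by
    rw [pow_succ] at hbal
    field_simp; linear_combination hbal + d * e * hα2
  have f10 : α / (a * q ^ N) * d / α = d / (a * q ^ N) := by field_simp
  have f11 : α / (a * q ^ N) * d * (α / (a * q ^ N)) = q / (e * q ^ N) := by
    rw [pow_succ] at hbal
    field_simp; linear_combination hbal + d * e * hα2
  have f12 : α / (α / (a * q ^ N)) = a * q ^ N := by field_simp
  have f13 : α / (a * q ^ N) / α = 1 / (a * q ^ N) := by field_simp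
  unfold ebin at H
  rw [f1, f2, f3, f4, f5, f6, f7, f8, f9, f10, f11, f12, f13] at H
  generalize hS : (∑ n ∈ Finset.range (N + 1), _ : ℂ) = S
  have H2 : thetaPochN p q (b * c / (a * q ^ N)) N *
      (thetaPochN p q (b * d / (a * q ^ N)) N * thetaPochN p q (c * d / (a * q ^ N)) N) =
      (thetaPochN p q (a * q / e) N * thetaPochN p q (a * q / d) N *
      thetaPochN p q (a * q / b) N * thetaPochN p q (a * q / c) N /
        (e ^ N * thetaPochN p q (a * q) N)) * S := by
    rw [H, ← hS, Finset.mul_sum]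
    refine Finset.sum_congr rfl fun n hn => ?_
    obtain ⟨i, hi⟩ : ∃ i, N = n + i := ⟨N - n, by have := Finset.mem_range.mp hn; omega⟩
    have T := ft_term hp hq0 ha hb hc hd he n i (hi ▸ hbal) hgq hga hgb hgc hgd hge
    have g1 : q / (e * q ^ N) * q ^ i = q / (e * q ^ n) := by rw [hi, pow_add]; field_simp
    have g2 : a * q ^ N / q ^ i = a * q ^ n := by rw [hi, pow_add]; field_simp
    have g3 : 1 / (a * q ^ N) / q ^ n = 1 / (a * q ^ (n + i + n)) := by
      rw [hi, pow_add q (n + i) n]; field_simp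
    rw [show N - n = i by omega, g1, g2, g3, hi]
    exact T
  have r1 := tpn_rev hp hq0 (z := b * c / (a * q ^ N)) (by simp [ha, hb, hc, hq0]) N
  have r2 := tpn_rev hp hq0 (z := b * d / (a * q ^ N)) (by simp [ha, hb, hd, hq0]) N
  have r3 := tpn_rev hp hq0 (z := c * d / (a * q ^ N)) (by simp [ha, hd, hc, hq0]) N
  have r4 := tpn_rev hp hq0 (z := e / (a * q ^ N)) (by simp [ha, he, hq0]) N
  rw [show q / (b * c / (a * q ^ N) * q ^ N) = a * q / (b * c) by field_simp] at r1
  rw [show q / (b * d / (a * q ^ N) * q ^ N) = a * q / (b * d) by field_simp] at r2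
  rw [show q / (c * d / (a * q ^ N) * q ^ N) = a * q / (c * d) by field_simp] at r3
  rw [show q / (e / (a * q ^ N) * q ^ N) = a * q / e by field_simp,
    show e / (a * q ^ N) = a * q / (b * c * d) by
      rw [pow_succ] at hbal; field_simp; linear_combination hbal] at r4
  have M := mono_final hq0 ha N hbal
  rw [show e / (a * q ^ N) = a * q / (b * c * d) by
      rw [pow_succ] at hbal; field_simp; linear_combination hbal] at M
  have z1 : thetaPochN p q (a * q / b) N ≠ 0 := tpn_ne fun j _ => hgb j
  have z2 : thetaPochN p q (a * q / c) N ≠ 0 := tpn_ne fun j _ => hgc j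
  have z3 : thetaPochN p q (a * q / d) N ≠ 0 := tpn_ne fun j _ => hgd j
  have z4 : thetaPochN p q (a * q / e) N ≠ 0 := tpn_ne fun j _ => hge j
  have z5 : thetaPochN p q (a * q) N ≠ 0 := tpn_ne fun j _ => by
    rw [mul_assoc, ← pow_succ']; exact hga _
  have z6 := pow_ne_zero N he
  have m4 : mrev q (a * q / (b * c * d)) N ≠ 0 := mrev_ne hq0 (by simp [ha, hb, hc, hd, hq0]) N
  rw [r1, r2, r3] at H2
  rw [r4]
  clear r1 r2 r3 r4 H hS hgen
  generalize mrev q (b * c / (a * q ^ N)) N = M1 at *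
  generalize mrev q (b * d / (a * q ^ N)) N = M2 at *
  generalize mrev q (c * d / (a * q ^ N)) N = M3 at *
  generalize mrev q (a * q / (b * c * d)) N = M4 at *
  generalize thetaPochN p q (a * q / (b * c)) N = X1 at *
  generalize thetaPochN p q (a * q / (b * d)) N = X2 at *
  generalize thetaPochN p q (a * q / (c * d)) N = X3 at *
  generalize thetaPochN p q (a * q / b) N = Z1 at *
  generalize thetaPochN p q (a * q / c) N = Z2 at *
  generalize thetaPochN p q (a * q / d) N = Z3 at *
  generalize thetaPochN p q (a * q / e) N = Z4 at *
  generalize thetaPochN p q (a * q) N = Z5 at *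
  generalize e ^ N = Z6 at *
  rw [eq_div_iff (by simp [*])]
  rw [div_mul_eq_mul_div, eq_div_iff (by simp [*])] at H2
  linear_combination (-M4) * H2 + Z5 * X1 * X2 * X3 * M
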